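/- arXiv:2507.16677 — 2 statements merged into one kernel-verified Lean document; each statement's English description precedes it below -/
import Mathlib

section
/- Let X be a δ-hyperbolic graph and let Y, Y' ⊆ X be distinct nonempty K-quasiconvex subsets such that diam(N_{2K+2δ}(Y') ∩ Y) ≤ M0 and diam(N_{2K+2δ}(Y) ∩ Y') ≤ M0. Then diam π_{Y'}(Y) ≤ M0 + 6K + 18δ + 4. -/
/-!
Let `p₁, p₂ ∈ Y'` be nearest points to `y₁, y₂ ∈ Y`. Cutting the geodesic quadrilateral
`p₁ p₂ y₂ y₁` into two slim triangles shows that every vertex `v` of `[p₁, p₂]` is `2δ`-close to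
`[p₁, y₁]`, `[y₁, y₂]` or `[y₂, p₂]`. If `v` is `2δ`-close to `w ∈ [p₁, y₁]`, then `p₁` is also a
nearest point of `Y'` to `w`, and `w` is `(K + 2δ)`-close to `Y'` by quasiconvexity, so
`d(v, p₁) ≤ K + 4δ`; the same holds for `p₂`. Hence a vertex `v` further than `K + 4δ` from both
ends is `2δ`-close to `[y₁, y₂]`, and a point of `Y'` that is `K`-close to `v` lies in the
`(2K + 2δ)`-neighborhood of `Y` (`exists_near_of_far_from_ends`).

Applying this to the vertices at distance `⌊K + 4δ⌋ + 1` from the two ends of `[p₁, p₂]` yields two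
points of `N_{2K+2δ}(Y) ∩ Y'`, which are at distance at most `M0`. This gives
`d(p₁, p₂) ≤ M0 + 4K + 8δ + 2`, which is stronger than the required bound.
-/

open scoped ENNReal

/-- `G` is `δ`-hyperbolic: every geodesic triangle is `δ`-slim, i.e. (the support of) each
geodesic side lies in the closed `δ`-neighborhood of the union of the other two sides. -/
def SlimTrianglesG {V : Type*} (G : SimpleGraph V) (δ : ℝ) : Prop :=
  ∀ ⦃x y z : V⦄ (p : G.Walk x y) (q : G.Walk x z) (r : G.Walk z y),
    p.length = G.dist x y → q.length = G.dist x z → r.length = G.dist z y →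
    ∀ v ∈ p.support, ∃ w, (w ∈ q.support ∨ w ∈ r.support) ∧ (G.dist v w : ℝ) ≤ δ

/-- `Y` is `K`-quasiconvex in `G`: every geodesic with endpoints in `Y` is contained in
the closed `K`-neighborhood of `Y`. -/
def QuasiconvexIn {V : Type*} (G : SimpleGraph V) (K : ℝ) (Y : Set V) : Prop :=
  ∀ ⦃x⦄, x ∈ Y → ∀ ⦃y⦄, y ∈ Y → ∀ w : G.Walk x y, w.length = G.dist x y →
    ∀ v ∈ w.support, ∃ u ∈ Y, (G.dist v u : ℝ) ≤ K

/-- The closed `r`-neighborhood of a set `A` of vertices. -/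
def nbhd {V : Type*} (G : SimpleGraph V) (r : ℝ) (A : Set V) : Set V :=
  {v | ∃ a ∈ A, (G.dist v a : ℝ) ≤ r}

/-- The nearest-point projection of the vertex `z` to the set `Y`:
`π_Y(z) = {y ∈ Y | dist(z,y) = dist(z,Y)}`. -/
def projSet {V : Type*} (G : SimpleGraph V) (Y : Set V) (z : V) : Set V :=
  {y ∈ Y | ∀ y' ∈ Y, G.dist z y ≤ G.dist z y'}

/-- The nearest-point projection of a set `A` to `Y`: `π_Y(A) = ⋃_{a ∈ A} π_Y(a)`. -/
def projSetOf {V : Type*} (G : SimpleGraph V) (Y A : Set V) : Set V :=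
  ⋃ a ∈ A, projSet G Y a

/-- The diameter (in `ℝ≥0∞`) of a set of vertices of `G`. -/
noncomputable def gdiam {V : Type*} (G : SimpleGraph V) (S : Set V) : ℝ≥0∞ :=
  ⨆ a ∈ S, ⨆ b ∈ S, (G.dist a b : ℝ≥0∞)

/-- `d_Y^π(A,B) = diam(π_Y(A) ∪ π_Y(B))`. -/
noncomputable def projDiam {V : Type*} (G : SimpleGraph V) (Y A B : Set V) : ℝ≥0∞ :=
  gdiam G (projSetOf G Y A ∪ projSetOf G Y B)

/-- A vertex on a geodesic walk cuts it into two geodesic pieces. -/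
lemma dist_add_dist_of_mem_geodesic {V : Type*} {G : SimpleGraph V} (hconn : G.Connected)
    {x y w : V} (p : G.Walk x y) (hp : p.length = G.dist x y) (hw : w ∈ p.support) :
    G.dist x w + G.dist w y = G.dist x y := by
  classical
  have h1 := SimpleGraph.dist_le (p.takeUntil w hw)
  have h2 := SimpleGraph.dist_le (p.dropUntil w hw)
  have h3 := congrArg SimpleGraph.Walk.length (p.take_spec hw)
  rw [SimpleGraph.Walk.length_append] at h3
  have h4 := hconn.dist_triangle (u := x) (v := w) (w := y)
  omega

lemma exists_vertex_at_dist {V : Type*} {G : SimpleGraph V} (hconn : G.Connected)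
    {x y : V} (p : G.Walk x y) (hp : p.length = G.dist x y) (i : ℕ) (hi : i ≤ G.dist x y) :
    ∃ v ∈ p.support, G.dist x v = i ∧ G.dist v y = G.dist x y - i := by
  refine ⟨p.getVert i, p.getVert_mem_support i, ?_⟩
  have h1 := SimpleGraph.dist_le (p.take i)
  have h2 := SimpleGraph.dist_le (p.drop i)
  rw [SimpleGraph.Walk.take_length] at h1
  rw [SimpleGraph.Walk.drop_length] at h2
  have h4 := hconn.dist_triangle (u := x) (v := p.getVert i) (w := y)
  omega

/-- If `p` is a nearest point of `Y'` to `y`, and `v` is `2δ`-close to a vertex `w` of a geodesic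
`[y, p]` and `K`-close to `Y'`, then `v` is `(K + 4δ)`-close to `p`, because `p` is also a nearest
point of `Y'` to `w`. -/
lemma dist_proj_le {V : Type*} {G : SimpleGraph V} (hconn : G.Connected) {δ K : ℝ}
    {Y' : Set V} {y p u v w : V} (hp : p ∈ projSet G Y' y)
    (hw : G.dist y w + G.dist w p = G.dist y p) (hu : u ∈ Y')
    (hvu : (G.dist v u : ℝ) ≤ K) (hvw : (G.dist v w : ℝ) ≤ 2 * δ) :
    (G.dist v p : ℝ) ≤ K + 4 * δ := by
  have h1 := hp.2 u hu
  have h2 := hconn.dist_triangle (u := y) (v := w) (w := u)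
  have h3 := hconn.dist_triangle (u := w) (v := v) (w := u)
  have h4 := hconn.dist_triangle (u := v) (v := w) (w := p)
  rw [G.dist_comm (u := w) (v := v)] at h3
  have h5 : G.dist v p ≤ 2 * G.dist v w + G.dist v u := by omega
  have h6 : (G.dist v p : ℝ) ≤ 2 * G.dist v w + G.dist v u := by exact_mod_cast h5
  linarith

/-- The middle part of a geodesic between two projection points fellow-travels both `Y'`
and `Y`. -/
lemma exists_near_of_far_from_ends {V : Type*} {G : SimpleGraph V} (hconn : G.Connected)
    {δ K : ℝ} (hδ : 0 ≤ δ) (hhyp : SlimTrianglesG G δ) {Y Y' : Set V}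
    (hY : QuasiconvexIn G K Y) (hY' : QuasiconvexIn G K Y')
    {y₁ y₂ p₁ p₂ v : V} (hy₁ : y₁ ∈ Y) (hy₂ : y₂ ∈ Y)
    (hp₁ : p₁ ∈ projSet G Y' y₁) (hp₂ : p₂ ∈ projSet G Y' y₂)
    (p : G.Walk p₁ p₂) (hp : p.length = G.dist p₁ p₂) (hv : v ∈ p.support)
    (h₁ : K + 4 * δ < G.dist v p₁) (h₂ : K + 4 * δ < G.dist v p₂) :
    ∃ u ∈ nbhd G (2 * K + 2 * δ) Y ∩ Y', (G.dist v u : ℝ) ≤ K := by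
  obtain ⟨u, hu, hvu⟩ := hY' hp₁.1 hp₂.1 p hp v hv
  refine ⟨u, ⟨?_, hu⟩, hvu⟩
  -- The diagonal `q = [p₁, y₂]` and the three remaining sides of the quadrilateral.
  obtain ⟨q, hq⟩ := hconn.exists_walk_length_eq_dist p₁ y₂
  obtain ⟨r, hr⟩ := hconn.exists_walk_length_eq_dist y₂ p₂
  obtain ⟨s, hs⟩ := hconn.exists_walk_length_eq_dist p₁ y₁
  obtain ⟨t, ht⟩ := hconn.exists_walk_length_eq_dist y₁ y₂
  obtain ⟨w, hw, hvw⟩ := hhyp p q r hp hq hr v hv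
  rcases hw with hw | hw
  · obtain ⟨w', hw', hww'⟩ := hhyp q s t hq hs ht w hw
    have hvw' : (G.dist v w' : ℝ) ≤ 2 * δ := by
      have h : (G.dist v w' : ℝ) ≤ G.dist v w + G.dist w w' := by
        exact_mod_cast hconn.dist_triangle
      linarith
    rcases hw' with hw' | hw'
    · have h := dist_add_dist_of_mem_geodesic hconn s hs hw'
      rw [G.dist_comm (u := p₁) (v := w'), G.dist_comm (u := w') (v := y₁),
        G.dist_comm (u := p₁) (v := y₁), add_comm] at h
      exact absurd (dist_proj_le hconn hp₁ h hu hvu hvw') (not_le.mpr h₁)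
    · obtain ⟨a, ha, hwa⟩ := hY hy₁ hy₂ t ht w' hw'
      refine ⟨a, ha, ?_⟩
      have h3 : (G.dist u a : ℝ) ≤ G.dist u v + G.dist v a := by
        exact_mod_cast hconn.dist_triangle
      have h4 : (G.dist v a : ℝ) ≤ G.dist v w' + G.dist w' a := by
        exact_mod_cast hconn.dist_triangle
      rw [G.dist_comm (u := u) (v := v)] at h3
      linarith
  · have h := dist_add_dist_of_mem_geodesic hconn r hr hw
    exact absurd (dist_proj_le hconn hp₂ h hu hvu (by linarith)) (not_le.mpr h₂)

lemma dist_le_of_gdiam_le {V : Type*} {G : SimpleGraph V} {S : Set V} {M : ℝ} (hM : 0 ≤ M)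
    (h : gdiam G S ≤ ENNReal.ofReal M) {a b : V} (ha : a ∈ S) (hb : b ∈ S) :
    (G.dist a b : ℝ) ≤ M := by
  have h1 : (G.dist a b : ℝ≥0∞) ≤ ENNReal.ofReal M := by
    refine le_trans ?_ h
    exact le_iSup₂_of_le a ha (le_iSup₂_of_le b hb le_rfl)
  rw [← ENNReal.ofReal_natCast] at h1
  exact (ENNReal.ofReal_le_ofReal_iff hM).mp h1

/-- If `Y, Y'` are distinct nonempty `K`-quasiconvex subsets of a `δ`-hyperbolic graph
with `diam(N_{2K+2δ}(Y') ∩ Y) ≤ M0` and `diam(N_{2K+2δ}(Y) ∩ Y') ≤ M0`, then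
`diam π_{Y'}(Y) ≤ M0 + 6K + 18δ + 4`. -/
theorem bounded_projection_of_separated
    {V : Type*} (G : SimpleGraph V) (hconn : G.Connected)
    (δ K M0 : ℝ) (hδ : 0 ≤ δ) (hK : 0 ≤ K) (hM0 : 0 ≤ M0)
    (hhyp : SlimTrianglesG G δ)
    (Y Y' : Set V) (hYne : Y.Nonempty) (hY'ne : Y'.Nonempty) (hne : Y ≠ Y')
    (hY : QuasiconvexIn G K Y) (hY' : QuasiconvexIn G K Y')
    (hsep : gdiam G (nbhd G (2 * K + 2 * δ) Y' ∩ Y) ≤ ENNReal.ofReal M0)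
    (hsep' : gdiam G (nbhd G (2 * K + 2 * δ) Y ∩ Y') ≤ ENNReal.ofReal M0) :
    gdiam G (projSetOf G Y' Y) ≤ ENNReal.ofReal (M0 + 6 * K + 18 * δ + 4) := by
  refine iSup₂_le fun p₁ hp₁ => iSup₂_le fun p₂ hp₂ => ?_
  simp only [projSetOf, Set.mem_iUnion, exists_prop] at hp₁ hp₂
  obtain ⟨y₁, hy₁, hp₁⟩ := hp₁
  obtain ⟨y₂, hy₂, hp₂⟩ := hp₂
  rw [← ENNReal.ofReal_natCast]
  apply ENNReal.ofReal_le_ofReal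
  -- `N` is the least integer that exceeds `K + 4δ`.
  set N : ℕ := ⌊K + 4 * δ⌋₊ + 1 with hN
  have hN1 : K + 4 * δ < N := by
    rw [hN]; push_cast; exact Nat.lt_floor_add_one _
  have hN2 : (N : ℝ) ≤ K + 4 * δ + 1 := by
    have := Nat.floor_le (a := K + 4 * δ) (by positivity)
    rw [hN]; push_cast; linarith
  rcases le_or_gt (G.dist p₁ p₂) (2 * N) with hd | hd
  · have hd' : (G.dist p₁ p₂ : ℝ) ≤ 2 * N := by exact_mod_cast hd
    linarith
  obtain ⟨p, hp⟩ := hconn.exists_walk_length_eq_dist p₁ p₂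
  obtain ⟨v, hv, hv1, hv2⟩ := exists_vertex_at_dist hconn p hp N (by omega)
  obtain ⟨v', hv', hv1', hv2'⟩ :=
    exists_vertex_at_dist hconn p hp (G.dist p₁ p₂ - N) (by omega)
  have far : ∀ n : ℕ, N ≤ n → K + 4 * δ < n := fun n hn =>
    hN1.trans_le (by exact_mod_cast hn)
  obtain ⟨u, hu, hvu⟩ := exists_near_of_far_from_ends hconn hδ hhyp hY hY' hy₁ hy₂ hp₁ hp₂ p hp hv
    (far _ (by rw [G.dist_comm]; omega)) (far _ (by omega))
  obtain ⟨u', hu', hvu'⟩ :=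
    exists_near_of_far_from_ends hconn hδ hhyp hY hY' hy₁ hy₂ hp₁ hp₂ p hp hv'
      (far _ (by rw [G.dist_comm]; omega)) (far _ (by omega))
  have huu := dist_le_of_gdiam_le hM0 hsep' hu hu'
  have e1 := hconn.dist_triangle (u := p₁) (v := v) (w := p₂)
  have e2 := hconn.dist_triangle (u := v) (v := v') (w := p₂)
  have e3 := hconn.dist_triangle (u := v) (v := u) (w := v')
  have e4 := hconn.dist_triangle (u := u) (v := u') (w := v')
  rw [G.dist_comm (u := u') (v := v')] at e4
  have e5 : G.dist p₁ p₂ ≤ 2 * N + G.dist v u + G.dist u u' + G.dist v' u' := by omega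
  have e6 : (G.dist p₁ p₂ : ℝ) ≤ 2 * N + G.dist v u + G.dist u u' + G.dist v' u' := by
    exact_mod_cast e5
  linarith
end

section
/- Let X be a δ-hyperbolic graph and let 𝒴 be an M0-geometrically separated family of nonempty K-quasiconvex subsets of X. There is a constant θ, depending only on δ, K and M0 and bounded above by a linear function of M0 (with coefficients depending only on δ and K), such that the family 𝒴 with the distance functions d_Y^π satisfies the projection axioms with constant θ; that is, for all pairwise distinct U, V, W, Y ∈ 𝒴: (I) d_Y^π(U,V) = d_Y^π(V,U); (II) d_Y^π(U,W) ≤ d_Y^π(U,V) + d_Y^π(V,W); (III) d_Y^π(U,U) ≤ θ; (IV) min{d_Y^π(U,V), d_V^π(U,Y)} ≤ θ; and (V) for all distinct U, V ∈ 𝒴 the set {Y ∈ 𝒴 − {U,V} : d_Y^π(U,V) ≥ θ} is finite. -/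
/-!
Everything follows from one observation about a quasiconvex set `Y` and nearest points `p`, `q` of
`Y` to `u`, `w`: geodesic quadrilaterals are `2δ`-slim, and the part of `[p, q]` away from its
endpoints cannot be `2δ`-close to `[p, u]` or `[w, q]`, since this would give a path from `u` or
`w` to `Y` shorter than the nearest one. So that part is `2δ`-close to `[u, w]` (`middle_near`). In
particular, if `p` and `q` are far apart then `[u, w]` passes near both of them.

* If `u`, `w` lie in another member `U` of the family, `[u, w]` is `K`-close to `U` and `[p, q]` is
  `K`-close to `Y`, so a long `[p, q]` contradicts the separation of `Y` and `N_{2K+2δ}(U)`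
  (`proj_bounded`). This is axiom (III).
* For (IV), take `u ∈ U` and `w ∈ π_W(u)`. If `p`, `q` are far apart, `[u, w]` passes near `q ∈ Y`
  at a point whose projection to `W` is again `w`; as projections are coarsely Lipschitz, `w` is
  close to `π_W(Y)` (`behrstock_point`). If they are close, `d_Y^π(U, W)` is bounded.
* For (V), fix a geodesic `[u, w]` from `U` to `W`. Each `Y` with large `d_Y^π(U, W)` has two far
  apart points close to vertices `x₁`, `x₂` of `[u, w]`. Two different `Y` cannot share the pair
  `(x₁, x₂)`, again by slimness of quadrilaterals and separation (`parallel_bound`), and there are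
  finitely many pairs.
-/

open scoped ENNReal

section Helpers

variable {V : Type*} {G : SimpleGraph V} {δ K M : ℝ}

/-! ### Geodesics and slim polygons -/

lemma rdist_triangle (hG : G.Connected) (a b c : V) :
    (G.dist a c : ℝ) ≤ G.dist a b + G.dist b c := by
  exact_mod_cast hG.dist_triangle

lemma rdist_comm (a b : V) : (G.dist a b : ℝ) = G.dist b a := by
  rw [SimpleGraph.dist_comm]

lemma rdist_of_mem_support (hG : G.Connected) {a b x : V} (p : G.Walk a b)
    (hp : p.length = G.dist a b) (hx : x ∈ p.support) :
    (G.dist a x : ℝ) + G.dist x b = G.dist a b := by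
  classical
  have h1 : G.dist a x ≤ (p.takeUntil x hx).length := SimpleGraph.dist_le _
  have h2 : G.dist x b ≤ (p.dropUntil x hx).length := SimpleGraph.dist_le _
  have h3 : (p.takeUntil x hx).length + (p.dropUntil x hx).length = p.length := by
    rw [← SimpleGraph.Walk.length_append, p.take_spec hx]
  have h4 : G.dist a b ≤ G.dist a x + G.dist x b := hG.dist_triangle
  have h5 : G.dist a x + G.dist x b = G.dist a b := by omega
  exact_mod_cast h5

lemma exists_point_at (hG : G.Connected) {a b : V} {n : ℕ} (hn : n ≤ G.dist a b) :
    ∃ p : G.Walk a b, p.length = G.dist a b ∧ ∃ v ∈ p.support, G.dist a v = n := by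
  obtain ⟨p, hp⟩ := hG.exists_walk_length_eq_dist a b
  refine ⟨p, hp, p.getVert n, p.getVert_mem_support n, ?_⟩
  have h1 : G.dist a (p.getVert n) ≤ n :=
    (SimpleGraph.dist_le (p.take n)).trans (by rw [SimpleGraph.Walk.take_length]; omega)
  have h2 : G.dist (p.getVert n) b ≤ p.length - n :=
    (SimpleGraph.dist_le (p.drop n)).trans (by rw [SimpleGraph.Walk.drop_length])
  have h4 : G.dist a b ≤ G.dist a (p.getVert n) + G.dist (p.getVert n) b := hG.dist_triangle
  omega

/-- Geodesic quadrilaterals are `2δ`-slim. The side `g` is a prescribed geodesic; of the two sides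
adjacent to `[p, q]` only the metric betweenness of their points is recorded. -/
lemma slim_quad (hG : G.Connected) (hS : SlimTrianglesG G δ) (hδ : 0 ≤ δ) {p q u w v : V}
    (g : G.Walk u w) (hg : g.length = G.dist u w)
    (s : G.Walk p q) (hs : s.length = G.dist p q) (hv : v ∈ s.support) :
    ∃ x, (G.dist v x : ℝ) ≤ 2 * δ ∧
      (x ∈ g.support ∨ (G.dist p x : ℝ) + G.dist x u = G.dist p u ∨
        (G.dist w x : ℝ) + G.dist x q = G.dist w q) := by
  obtain ⟨a, ha⟩ := hG.exists_walk_length_eq_dist p u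
  obtain ⟨b, hb⟩ := hG.exists_walk_length_eq_dist w q
  obtain ⟨c, hc⟩ := hG.exists_walk_length_eq_dist p w
  obtain ⟨x, hx | hx, hvx⟩ := hS s c b hs hc hb v hv
  · obtain ⟨y, hy | hy, hxy⟩ := hS c a g hc ha hg x hx
    · exact ⟨y, by linarith [rdist_triangle hG v x y],
        Or.inr (Or.inl (rdist_of_mem_support hG a ha hy))⟩
    · exact ⟨y, by linarith [rdist_triangle hG v x y], Or.inl hy⟩
  · exact ⟨x, by linarith, Or.inr (Or.inr (rdist_of_mem_support hG b hb hx))⟩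

/-! ### Diameters and projections -/

lemma gdiam_le_iff {S : Set V} (hM : 0 ≤ M) :
    gdiam G S ≤ ENNReal.ofReal M ↔ ∀ a ∈ S, ∀ b ∈ S, (G.dist a b : ℝ) ≤ M := by
  simp only [gdiam, iSup_le_iff]
  refine forall₂_congr fun a _ => forall₂_congr fun b _ => ?_
  rw [← ENNReal.ofReal_natCast, ENNReal.ofReal_le_ofReal_iff hM]

lemma dist_le_gdiam {S : Set V} {a b : V} (ha : a ∈ S) (hb : b ∈ S) :
    (G.dist a b : ℝ≥0∞) ≤ gdiam G S :=
  le_iSup₂_of_le a ha (le_iSup₂_of_le b hb le_rfl)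

lemma mem_projSetOf {Y A : Set V} {y : V} :
    y ∈ projSetOf G Y A ↔ ∃ a ∈ A, y ∈ projSet G Y a := by
  simp [projSetOf]

lemma projSet_nonempty {Y : Set V} (hY : Y.Nonempty) (z : V) : (projSet G Y z).Nonempty := by
  obtain ⟨y, hy, hmin⟩ := WellFounded.has_min
    (InvImage.wf (fun y => G.dist z y) Nat.lt_wfRel.wf) Y hY
  exact ⟨y, hy, fun y' hy' => not_lt.1 (hmin y' hy')⟩

lemma projSetOf_nonempty {Y A : Set V} (hY : Y.Nonempty) (hA : A.Nonempty) :
    (projSetOf G Y A).Nonempty := by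
  obtain ⟨a, ha⟩ := hA
  obtain ⟨y, hy⟩ := projSet_nonempty (G := G) hY a
  exact ⟨y, mem_projSetOf.2 ⟨a, ha, hy⟩⟩

lemma rdist_le_of_projSet {Y : Set V} {u p y : V} (hp : p ∈ projSet G Y u) (hy : y ∈ Y) :
    (G.dist u p : ℝ) ≤ G.dist u y := by
  exact_mod_cast hp.2 y hy

/-- A nearest point of `Y` to `u` is also nearest to every point of a geodesic joining them. -/
lemma projSet_of_between (hG : G.Connected) {Y : Set V} {u x p : V} (hp : p ∈ projSet G Y u)
    (hx : (G.dist u x : ℝ) + G.dist x p = G.dist u p) : p ∈ projSet G Y x := by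
  refine ⟨hp.1, fun y hy => ?_⟩
  have h1 := rdist_le_of_projSet hp hy
  have h2 := rdist_triangle hG u x y
  have : (G.dist x p : ℝ) ≤ G.dist x y := by linarith
  exact_mod_cast this

lemma projDiam_comm (Y U W : Set V) : projDiam G Y U W = projDiam G Y W U := by
  rw [projDiam, projDiam, Set.union_comm]

lemma projDiam_triangle (hG : G.Connected) {Y W : Set V} (hY : Y.Nonempty) (hW : W.Nonempty)
    (U Z : Set V) : projDiam G Y U Z ≤ projDiam G Y U W + projDiam G Y W Z := by
  obtain ⟨c, hc⟩ := projSetOf_nonempty (G := G) hY hW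
  unfold projDiam
  have key : ∀ a ∈ projSetOf G Y U, ∀ b ∈ projSetOf G Y Z,
      (G.dist a b : ℝ≥0∞) ≤ gdiam G (projSetOf G Y U ∪ projSetOf G Y W) +
        gdiam G (projSetOf G Y W ∪ projSetOf G Y Z) := fun a ha b hb => by
    have h : (G.dist a b : ℝ≥0∞) ≤ G.dist a c + G.dist c b := by
      exact_mod_cast hG.dist_triangle
    exact h.trans (add_le_add (dist_le_gdiam (Or.inl ha) (Or.inr hc))
      (dist_le_gdiam (Or.inl hc) (Or.inr hb)))
  conv_lhs => unfold gdiam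
  refine iSup₂_le fun a ha => iSup₂_le fun b hb => ?_
  rcases ha with ha | ha <;> rcases hb with hb | hb
  · exact le_add_right (dist_le_gdiam (Set.mem_union_left _ ha) (Set.mem_union_left _ hb))
  · exact key a ha b hb
  · rw [G.dist_comm]
    exact key b hb a ha
  · exact le_add_left (dist_le_gdiam (Set.mem_union_right _ ha) (Set.mem_union_right _ hb))

/-! ### Projections to quasiconvex sets -/

/-- If `p`, `q` are nearest points of `Y` to `u`, `w`, then the part of `[p, q]` away from its
endpoints runs `2δ`-close to `[u, w]`: a point `2δ`-close to `[p, u]` instead would provide a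
shortcut from `u` to `Y`. -/
lemma middle_near (hG : G.Connected) (hS : SlimTrianglesG G δ) (hδ : 0 ≤ δ) {Y : Set V}
    (hQ : QuasiconvexIn G K Y) {p q u w v : V} (hp : p ∈ projSet G Y u) (hq : q ∈ projSet G Y w)
    (g : G.Walk u w) (hg : g.length = G.dist u w)
    (s : G.Walk p q) (hs : s.length = G.dist p q) (hv : v ∈ s.support)
    (hpv : 4 * δ + K < G.dist p v) (hvq : 4 * δ + K < G.dist v q) :
    ∃ x ∈ g.support, (G.dist v x : ℝ) ≤ 2 * δ := by
  obtain ⟨y, hy, hvy⟩ := hQ hp.1 hq.1 s hs v hv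
  obtain ⟨x, hvx, hx | hx | hx⟩ := slim_quad hG hS hδ g hg s hs hv
  · exact ⟨x, hx, hvx⟩
  · exfalso
    have h1 := rdist_le_of_projSet hp hy
    linarith [rdist_triangle hG u x y, rdist_triangle hG x v y, rdist_triangle hG p x v,
      rdist_comm (G := G) v x, rdist_comm (G := G) u x, rdist_comm (G := G) u p]
  · exfalso
    have h1 := rdist_le_of_projSet hq hy
    linarith [rdist_triangle hG w x y, rdist_triangle hG x v y, rdist_triangle hG v x q,
      rdist_comm (G := G) v x]

lemma proj_near_left (hG : G.Connected) (hS : SlimTrianglesG G δ) (hδ : 0 ≤ δ) (hK : 0 ≤ K)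
    {Y : Set V} (hQ : QuasiconvexIn G K Y) {p q u w : V} (hp : p ∈ projSet G Y u)
    (hq : q ∈ projSet G Y w) (g : G.Walk u w) (hg : g.length = G.dist u w)
    (hpq : 2 * (4 * δ + K) + 2 < G.dist p q) :
    ∃ x ∈ g.support, (G.dist p x : ℝ) ≤ 6 * δ + K + 1 := by
  have h0 : 0 ≤ 4 * δ + K := by positivity
  have hlt := Nat.lt_floor_add_one (4 * δ + K)
  have hle := Nat.floor_le h0
  set n := ⌊4 * δ + K⌋₊
  have hn : n + 1 ≤ G.dist p q := by
    have : ((n + 1 : ℕ) : ℝ) ≤ G.dist p q := by push_cast; linarith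
    exact_mod_cast this
  obtain ⟨s, hs, v, hv, hpv⟩ := exists_point_at hG hn
  have hb := rdist_of_mem_support hG s hs hv
  have hpv' : (G.dist p v : ℝ) = n + 1 := by rw [hpv]; push_cast; rfl
  obtain ⟨x, hx, hvx⟩ := middle_near hG hS hδ hQ hp hq g hg s hs hv
    (by linarith) (by linarith)
  exact ⟨x, hx, by linarith [rdist_triangle hG p v x]⟩

lemma proj_near_right (hG : G.Connected) (hS : SlimTrianglesG G δ) (hδ : 0 ≤ δ) (hK : 0 ≤ K)
    {Y : Set V} (hQ : QuasiconvexIn G K Y) {p q u w : V} (hp : p ∈ projSet G Y u)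
    (hq : q ∈ projSet G Y w) (g : G.Walk u w) (hg : g.length = G.dist u w)
    (hpq : 2 * (4 * δ + K) + 2 < G.dist p q) :
    ∃ x ∈ g.support, (G.dist q x : ℝ) ≤ 6 * δ + K + 1 := by
  obtain ⟨x, hx, h⟩ := proj_near_left hG hS hδ hK hQ hq hp g.reverse
    (by rw [SimpleGraph.Walk.length_reverse, hg, SimpleGraph.dist_comm])
    (by rwa [rdist_comm])
  exact ⟨x, by simpa using hx, h⟩

/-- Nearest-point projection to a quasiconvex set is coarsely Lipschitz. -/
lemma proj_lipschitz (hG : G.Connected) (hS : SlimTrianglesG G δ) (hδ : 0 ≤ δ) (hK : 0 ≤ K)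
    {Y : Set V} (hQ : QuasiconvexIn G K Y) {p q u w : V} (hp : p ∈ projSet G Y u)
    (hq : q ∈ projSet G Y w) {C : ℝ} (huw : (G.dist u w : ℝ) ≤ C) :
    (G.dist p q : ℝ) ≤ 2 * (4 * δ + K) + 2 + 3 * C + 2 * (6 * δ + K + 1) := by
  have hC : 0 ≤ C := (Nat.cast_nonneg _).trans huw
  by_contra! hcon
  obtain ⟨g, hg⟩ := hG.exists_walk_length_eq_dist u w
  obtain ⟨x, hx, hpx⟩ := proj_near_left hG hS hδ hK hQ hp hq g hg (by linarith)
  have hb := rdist_of_mem_support hG g hg hx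
  -- `p ∈ Y` is close to `x`, which bounds the distances of `u` and of `w` to `Y`.
  have h2 := rdist_le_of_projSet hq hp.1
  have hux : (0 : ℝ) ≤ G.dist u x := Nat.cast_nonneg _
  have hxw : (0 : ℝ) ≤ G.dist x w := Nat.cast_nonneg _
  linarith [rdist_triangle hG w x p, rdist_triangle hG p w q, rdist_triangle hG p x w,
    rdist_comm (G := G) x p, rdist_comm (G := G) w x]

/-! ### Geometric separation -/

/-- If every geodesic joining two points of `Y`, with `R`-balls about its ends removed, lies in
`N_{K+2δ}(U)`, then their distance is controlled by the separation constant of `Y` and `U`. -/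
lemma overlap_bound (hG : G.Connected) (hK : 0 ≤ K) (hM : 0 ≤ M) {Y U : Set V}
    (hQ : QuasiconvexIn G K Y)
    (hsep : gdiam G (Y ∩ nbhd G (2 * K + 2 * δ) U) ≤ ENNReal.ofReal M)
    {p q : V} (hp : p ∈ Y) (hq : q ∈ Y) {R : ℝ} (hR : 0 ≤ R)
    (hnear : ∀ s : G.Walk p q, s.length = G.dist p q → ∀ v ∈ s.support,
      R < G.dist p v → R < G.dist v q → ∃ z ∈ U, (G.dist v z : ℝ) ≤ K + 2 * δ) :
    (G.dist p q : ℝ) ≤ M + 2 * K + 2 * R + 2 := by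
  by_contra! hcon
  have hlt := Nat.lt_floor_add_one R
  have hle := Nat.floor_le hR
  set n := ⌊R⌋₊
  have hn : 2 * (n + 1) ≤ G.dist p q := by
    have : ((2 * (n + 1) : ℕ) : ℝ) ≤ G.dist p q := by push_cast; linarith
    exact_mod_cast this
  -- Each point of the middle part is `K`-close to a point of `Y ∩ N_{2K+2δ}(U)`.
  have key : ∀ k, n + 1 ≤ k → k + (n + 1) ≤ G.dist p q → ∃ v y,
      y ∈ Y ∩ nbhd G (2 * K + 2 * δ) U ∧ (G.dist v y : ℝ) ≤ K ∧
      (G.dist p v : ℝ) = k ∧ (G.dist p v : ℝ) + G.dist v q = G.dist p q := by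
    intro k hk1 hk2
    obtain ⟨s, hs, v, hv, hpv⟩ := exists_point_at hG (show k ≤ G.dist p q by omega)
    have hb := rdist_of_mem_support hG s hs hv
    have hpv' : (G.dist p v : ℝ) = k := by rw [hpv]
    have hk1' : (n : ℝ) + 1 ≤ k := by exact_mod_cast hk1
    have hk2' : (k : ℝ) + (n + 1) ≤ G.dist p q := by exact_mod_cast hk2
    obtain ⟨y, hy, hvy⟩ := hQ hp hq s hs v hv
    obtain ⟨z, hz, hvz⟩ := hnear s hs v hv (by linarith) (by linarith)
    refine ⟨v, y, ⟨hy, z, hz, ?_⟩, hvy, hpv', hb⟩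
    linarith [rdist_triangle hG y v z, rdist_comm (G := G) v y]
  obtain ⟨v₁, y₁, hy₁, hvy₁, hpv₁, -⟩ := key (n + 1) le_rfl (by omega)
  obtain ⟨v₂, y₂, hy₂, hvy₂, hpv₂', hb₂⟩ := key (G.dist p q - (n + 1)) (by omega) (by omega)
  have hpv₂ : (G.dist v₂ q : ℝ) = n + 1 := by
    have : ((G.dist p q - (n + 1) : ℕ) : ℝ) = G.dist p q - (n + 1) := by
      rw [Nat.cast_sub (by omega)]; push_cast; rfl
    linarith
  have hM' := (gdiam_le_iff hM).1 hsep y₁ hy₁ y₂ hy₂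
  push_cast at hpv₁
  linarith [rdist_triangle hG p v₁ q, rdist_triangle hG v₁ y₁ q, rdist_triangle hG y₁ y₂ q,
    rdist_triangle hG y₂ v₂ q, rdist_comm (G := G) v₂ y₂]

/-- The projection of one member of a separated family to another has bounded diameter. -/
lemma proj_bounded (hG : G.Connected) (hS : SlimTrianglesG G δ) (hδ : 0 ≤ δ) (hK : 0 ≤ K)
    (hM : 0 ≤ M) {Y U : Set V} (hQ : QuasiconvexIn G K Y) (hQU : QuasiconvexIn G K U)
    (hsep : gdiam G (Y ∩ nbhd G (2 * K + 2 * δ) U) ≤ ENNReal.ofReal M)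
    {p q : V} (hp : p ∈ projSetOf G Y U) (hq : q ∈ projSetOf G Y U) :
    (G.dist p q : ℝ) ≤ M + 2 * K + 2 * (4 * δ + K) + 2 := by
  obtain ⟨u, hu, hp⟩ := mem_projSetOf.1 hp
  obtain ⟨w, hw, hq⟩ := mem_projSetOf.1 hq
  obtain ⟨g, hg⟩ := hG.exists_walk_length_eq_dist u w
  refine overlap_bound hG hK hM hQ hsep hp.1 hq.1 (by positivity) fun s hs v hv h1 h2 => ?_
  obtain ⟨x, hx, hvx⟩ := middle_near hG hS hδ hQ hp hq g hg s hs hv h1 h2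
  obtain ⟨z, hz, hxz⟩ := hQU hu hw g hg x hx
  exact ⟨z, hz, by linarith [rdist_triangle hG v x z]⟩

/-- Two members of a separated family cannot both contain points close to the two ends of a long
segment. -/
lemma parallel_bound (hG : G.Connected) (hS : SlimTrianglesG G δ) (hδ : 0 ≤ δ) (hK : 0 ≤ K)
    (hM : 0 ≤ M) {Y U : Set V} (hQ : QuasiconvexIn G K Y) (hQU : QuasiconvexIn G K U)
    (hsep : gdiam G (Y ∩ nbhd G (2 * K + 2 * δ) U) ≤ ENNReal.ofReal M)
    {p q p' q' : V} (hp : p ∈ Y) (hq : q ∈ Y) (hp' : p' ∈ U) (hq' : q' ∈ U) {E : ℝ}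
    (hpp : (G.dist p p' : ℝ) ≤ E) (hqq : (G.dist q q' : ℝ) ≤ E) :
    (G.dist p q : ℝ) ≤ M + 2 * K + 2 * (E + 2 * δ) + 2 := by
  have hE : 0 ≤ E := (Nat.cast_nonneg _).trans hpp
  obtain ⟨g, hg⟩ := hG.exists_walk_length_eq_dist p' q'
  refine overlap_bound hG hK hM hQ hsep hp hq (by positivity) fun s hs v hv h1 h2 => ?_
  obtain ⟨x, hvx, hx | hx | hx⟩ := slim_quad hG hS hδ g hg s hs hv
  · obtain ⟨z, hz, hxz⟩ := hQU hp' hq' g hg x hx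
    exact ⟨z, hz, by linarith [rdist_triangle hG v x z]⟩
  · exfalso
    have h0 : (0 : ℝ) ≤ G.dist x p' := Nat.cast_nonneg _
    linarith [rdist_triangle hG p x v, rdist_comm (G := G) v x]
  · exfalso
    have h0 : (0 : ℝ) ≤ G.dist q' x := Nat.cast_nonneg _
    linarith [rdist_triangle hG v x q, rdist_comm (G := G) q q']

/-- A bound on the distance between one point of `π_Y(U)` and one point of `π_Y(W)` bounds
`d_Y^π(U, W)`, as both projections have bounded diameter. -/
lemma projDiam_le_of_pair (hG : G.Connected) {Y U W : Set V} {T C : ℝ} (hT : 0 ≤ T)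
    (hU : ∀ a ∈ projSetOf G Y U, ∀ b ∈ projSetOf G Y U, (G.dist a b : ℝ) ≤ T)
    (hW : ∀ a ∈ projSetOf G Y W, ∀ b ∈ projSetOf G Y W, (G.dist a b : ℝ) ≤ T)
    {p q : V} (hp : p ∈ projSetOf G Y U) (hq : q ∈ projSetOf G Y W)
    (hpq : (G.dist p q : ℝ) ≤ C) : projDiam G Y U W ≤ ENNReal.ofReal (2 * T + C) := by
  have hC : 0 ≤ C := (Nat.cast_nonneg _).trans hpq
  have key : ∀ a ∈ projSetOf G Y U, ∀ b ∈ projSetOf G Y W, (G.dist a b : ℝ) ≤ 2 * T + C :=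
    fun a ha b hb => by
      linarith [hU a ha p hp, hW q hq b hb, rdist_triangle hG a p b, rdist_triangle hG p q b]
  refine (gdiam_le_iff (by positivity)).2 fun a ha b hb => ?_
  rcases ha with ha | ha <;> rcases hb with hb | hb
  · linarith [hU a ha b hb]
  · exact key a ha b hb
  · rw [rdist_comm]
    exact key b hb a ha
  · linarith [hW a ha b hb]

/-- If the nearest points of `Y` to `u` and to a nearest point `w` of `W` to `u` are far apart,
then `[u, w]` passes near `Y`, so some point of `π_W(Y)` is close to `w`. -/
lemma behrstock_point (hG : G.Connected) (hS : SlimTrianglesG G δ) (hδ : 0 ≤ δ) (hK : 0 ≤ K)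
    {Y W : Set V} (hQ : QuasiconvexIn G K Y) (hQW : QuasiconvexIn G K W) (hW : W.Nonempty)
    {u w p q : V} (hw : w ∈ projSet G W u) (hp : p ∈ projSet G Y u) (hq : q ∈ projSet G Y w)
    (hpq : 2 * (4 * δ + K) + 2 < G.dist p q) :
    ∃ z ∈ projSetOf G W Y,
      (G.dist w z : ℝ) ≤ 2 * (4 * δ + K) + 2 + 3 * (6 * δ + K + 1) + 2 * (6 * δ + K + 1) := by
  obtain ⟨g, hg⟩ := hG.exists_walk_length_eq_dist u w
  obtain ⟨x, hx, hqx⟩ := proj_near_right hG hS hδ hK hQ hp hq g hg hpq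
  obtain ⟨z, hz⟩ := projSet_nonempty (G := G) hW q
  have hwx := projSet_of_between hG hw (rdist_of_mem_support hG g hg hx)
  refine ⟨z, mem_projSetOf.2 ⟨q, hq.1, hz⟩, ?_⟩
  exact proj_lipschitz hG hS hδ hK hQW hwx hz (by rwa [rdist_comm])

end Helpers

universe u

/-- An `M0`-geometrically separated family `𝒴` of nonempty `K`-quasiconvex subsets of a
`δ`-hyperbolic graph, with the distance functions `d_Y^π`, satisfies the projection
axioms with a constant `θ` depending only on `δ`, `K`, `M0` and bounded above by a linear
function of `M0` with coefficients depending only on `δ` and `K`. -/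
theorem projection_axioms (δ K : ℝ) (hδ : 0 ≤ δ) (hK : 0 ≤ K) :
    ∃ c₁ c₂ : ℝ, 0 ≤ c₁ ∧ 0 ≤ c₂ ∧ ∀ M0 : ℝ, 0 ≤ M0 →
      ∃ θ : ℝ, θ ≤ c₁ * M0 + c₂ ∧
        ∀ (V : Type u) (G : SimpleGraph V), G.Connected → SlimTrianglesG G δ →
          ∀ 𝒴 : Set (Set V),
            (∀ Y ∈ 𝒴, Y.Nonempty) → (∀ Y ∈ 𝒴, QuasiconvexIn G K Y) →
            (∀ Y ∈ 𝒴, ∀ Y' ∈ 𝒴, Y ≠ Y' →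
              gdiam G (Y ∩ nbhd G (2 * K + 2 * δ) Y') ≤ ENNReal.ofReal M0) →
            (∀ U ∈ 𝒴, ∀ W ∈ 𝒴, ∀ Z ∈ 𝒴, ∀ Y ∈ 𝒴,
              U ≠ W → U ≠ Z → U ≠ Y → W ≠ Z → W ≠ Y → Z ≠ Y →
              -- (I) symmetry
              projDiam G Y U W = projDiam G Y W U ∧
              -- (II) triangle inequality
              projDiam G Y U Z ≤ projDiam G Y U W + projDiam G Y W Z ∧
              -- (III) bounded self-projection
              projDiam G Y U U ≤ ENNReal.ofReal θ ∧
              -- (IV) Behrstock inequality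
              min (projDiam G Y U W) (projDiam G W U Y) ≤ ENNReal.ofReal θ) ∧
            -- (V) finitely many large projections
            (∀ U ∈ 𝒴, ∀ W ∈ 𝒴, U ≠ W →
              {Y | Y ∈ 𝒴 ∧ Y ≠ U ∧ Y ≠ W ∧
                ENNReal.ofReal θ ≤ projDiam G Y U W}.Finite) := by
  -- `E` bounds how far projection points are from `[u, w]`; `M + t` bounds `diam π_Y(U)`.
  set E : ℝ := 6 * δ + K + 1 with hE
  set L : ℝ := 2 * (4 * δ + K) + 2 with hL
  set t : ℝ := 2 * K + 2 * (4 * δ + K) + 2 with ht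
  set b : ℝ := 2 * K + 2 * (2 * E + 2 * δ) + 2 + L + 5 * E with hb
  have hE0 : 0 ≤ E := by positivity
  have hL0 : 0 ≤ L := by positivity
  have ht0 : 0 ≤ t := by positivity
  have hb0 : 0 ≤ b := by positivity
  refine ⟨3, 2 * t + b + 1, by norm_num, by positivity, fun M hM => ?_⟩
  refine ⟨2 * (M + t) + (M + b) + 1, by linarith, ?_⟩
  intro V G hG hS 𝒴 hne hQ hsep
  have hT : 0 ≤ M + t := by positivity
  have hself : ∀ Y ∈ 𝒴, ∀ U ∈ 𝒴, U ≠ Y → ∀ a ∈ projSetOf G Y U, ∀ c ∈ projSetOf G Y U,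
      (G.dist a c : ℝ) ≤ M + t := fun Y hY U hU hUY a ha c hc => by
    have := proj_bounded hG hS hδ hK hM (hQ Y hY) (hQ U hU) (hsep Y hY U hU hUY.symm) ha hc
    linarith
  refine ⟨?_, ?_⟩
  · intro U hU W hW Z hZ Y hY hUW hUZ hUY hWZ hWY hZY
    refine ⟨projDiam_comm _ _ _, projDiam_triangle hG (hne Y hY) (hne W hW) _ _, ?_, ?_⟩
    · refine (gdiam_le_iff (by positivity)).2 fun a ha c hc => ?_
      rw [Set.union_self] at ha hc
      linarith [hself Y hY U hU hUY a ha c hc]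
    · obtain ⟨u, hu⟩ := hne U hU
      obtain ⟨w, hw⟩ := projSet_nonempty (G := G) (hne W hW) u
      obtain ⟨p, hp⟩ := projSet_nonempty (G := G) (hne Y hY) u
      obtain ⟨q, hq⟩ := projSet_nonempty (G := G) (hne Y hY) w
      by_cases hpq : (G.dist p q : ℝ) ≤ L
      · refine (min_le_left _ _).trans ((projDiam_le_of_pair hG hT (hself Y hY U hU hUY)
          (hself Y hY W hW hWY) (mem_projSetOf.2 ⟨u, hu, hp⟩) (mem_projSetOf.2 ⟨w, hw.1, hq⟩)
          hpq).trans (ENNReal.ofReal_le_ofReal ?_))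
        linarith
      · obtain ⟨z, hz, hwz⟩ := behrstock_point hG hS hδ hK (hQ Y hY) (hQ W hW) (hne W hW)
          hw hp hq (not_le.1 hpq)
        refine (min_le_right _ _).trans ((projDiam_le_of_pair hG hT (hself W hW U hU hUW)
          (hself W hW Y hY hWY.symm) (mem_projSetOf.2 ⟨u, hu, hw⟩) hz
          hwz).trans (ENNReal.ofReal_le_ofReal ?_))
        linarith
  · intro U hU W hW hUW
    obtain ⟨u, hu⟩ := hne U hU
    obtain ⟨w, hw⟩ := hne W hW
    obtain ⟨g, hg⟩ := hG.exists_walk_length_eq_dist u w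
    -- Each `Y` in the set has far apart points `p`, `q` close to vertices `x.1`, `x.2` of the
    -- finite path `g`, and `Y` is determined by the pair `x`.
    have key : ∀ Y, ∃ x : V × V, (Y ∈ 𝒴 ∧ Y ≠ U ∧ Y ≠ W ∧
        ENNReal.ofReal (2 * (M + t) + (M + b) + 1) ≤ projDiam G Y U W) →
        (x.1 ∈ g.support ∧ x.2 ∈ g.support) ∧ ∃ p ∈ Y, ∃ q ∈ Y, (G.dist p x.1 : ℝ) ≤ E ∧
          (G.dist q x.2 : ℝ) ≤ E ∧ M + b < G.dist p q := by
      intro Y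
      by_cases h : Y ∈ 𝒴 ∧ Y ≠ U ∧ Y ≠ W ∧
        ENNReal.ofReal (2 * (M + t) + (M + b) + 1) ≤ projDiam G Y U W
      · obtain ⟨hY, hYU, hYW, hbig⟩ := h
        obtain ⟨p, hp⟩ := projSet_nonempty (G := G) (hne Y hY) u
        obtain ⟨q, hq⟩ := projSet_nonempty (G := G) (hne Y hY) w
        have hpq : M + b < G.dist p q := by
          by_contra! hcon
          have h1 := hbig.trans (projDiam_le_of_pair hG hT (hself Y hY U hU hYU.symm)
            (hself Y hY W hW hYW.symm) (mem_projSetOf.2 ⟨u, hu, hp⟩)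
            (mem_projSetOf.2 ⟨w, hw, hq⟩) hcon)
          rw [ENNReal.ofReal_le_ofReal_iff (by positivity)] at h1
          linarith
        obtain ⟨x, hx, hpx⟩ :=
          proj_near_left hG hS hδ hK (hQ Y hY) hp hq g hg (by linarith)
        obtain ⟨y, hy, hqy⟩ :=
          proj_near_right hG hS hδ hK (hQ Y hY) hp hq g hg (by linarith)
        exact ⟨(x, y), fun _ => ⟨⟨hx, hy⟩, p, hp.1, q, hq.1, hpx, hqy, hpq⟩⟩
      · exact ⟨(u, u), fun h' => (h h').elim⟩
    choose f hf using key
    have hfin : ({x | x ∈ g.support} ×ˢ {x | x ∈ g.support} : Set (V × V)).Finite :=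
      (List.finite_toSet _).prod (List.finite_toSet _)
    refine Set.Finite.of_injOn (f := f) (fun Y hY => (hf Y hY).1) ?_ hfin
    intro Y hY Y' hY' heq
    by_contra hYY
    obtain ⟨-, p, hp, q, hq, hpx, hqx, hpq⟩ := hf Y hY
    obtain ⟨-, p', hp', q', hq', hpx', hqx', -⟩ := hf Y' hY'
    rw [← heq] at hpx' hqx'
    have := parallel_bound hG hS hδ hK hM (hQ Y hY.1) (hQ Y' hY'.1)
      (hsep Y hY.1 Y' hY'.1 hYY) hp hq hp' hq' (E := 2 * E)
      (by linarith [rdist_triangle hG p (f Y).1 p', rdist_comm (G := G) p' (f Y).1])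
      (by linarith [rdist_triangle hG q (f Y).2 q', rdist_comm (G := G) q' (f Y).2])
    linarith
end
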